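/- Assume that M is a projective R-module, that M/Σ_I is a projective R-module for every subset I ⊆ {1,…,n}, and that the collection M_1,…,M_n is distributive. Then for every subset I ⊆ {1,…,n} the R-module L^I := Π_{{1,…,n}∖I} / (Π_{{1,…,n}∖I} ∩ Σ_I) is projective. -/

import Mathlib

/-!
STATEMENT 5: if `M` and all quotients `M/Σ_I` are projective `R`-modules and the collection
`M_1, …, M_n` is distributive, then for every `I ⊆ {1,…,n}` the `R`-module
`L^I = Π_{{1,…,n}∖I} / (Π_{{1,…,n}∖I} ∩ Σ_I)` is projective.
-/

variable {R M : Type*} [CommRing R] [AddCommGroup M] [Module R M]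

/-- `Σ_I = ∑_{i ∈ I} M_i` (with `Σ_∅ = 0`). -/
abbrev sigmaSub {n : ℕ} (Mf : Fin n → Submodule R M) (I : Finset (Fin n)) : Submodule R M :=
  I.sup Mf

/-- `Π_I = ⋂_{i ∈ I} M_i` (with `Π_∅ = M`). -/
abbrev piSub {n : ℕ} (Mf : Fin n → Submodule R M) (I : Finset (Fin n)) : Submodule R M :=
  I.inf Mf

/-- The collection `M_1, …, M_n` is distributive if the sublattice of the lattice of
`R`-submodules of `M` generated by `{M_1, …, M_n}` under `+` (= `⊔`) and `∩` (= `⊓`)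
is a distributive lattice. -/
def IsDistributiveFamily {n : ℕ} (Mf : Fin n → Submodule R M) : Prop :=
  ∀ a ∈ latticeClosure (Set.range Mf), ∀ b ∈ latticeClosure (Set.range Mf),
    ∀ c ∈ latticeClosure (Set.range Mf), a ⊓ (b ⊔ c) = (a ⊓ b) ⊔ (a ⊓ c)

/-- `L^I = Π_{{1,…,n}∖I} / (Π_{{1,…,n}∖I} ∩ Σ_I)`. -/
abbrev subquotL {n : ℕ} (Mf : Fin n → Submodule R M) (I : Finset (Fin n)) : Type _ :=
  ↥(piSub Mf Iᶜ) ⧸ Submodule.comap (piSub Mf Iᶜ).subtype (sigmaSub Mf I)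

/-!
For submodules `U, V` of `E` there is an exact sequence `0 → U/(U ∩ V) → E/V → E/(U + V) → 0`. If
`E/(U + V)` is projective the sequence splits, so `E/V` is projective if and only if `U/(U ∩ V)`
is. With `U = Π_J` and `V = Σ_K` this reduces the theorem to the projectivity of `E/(Π_J + Σ_K)`,
which is proved by induction on `J`, for all `K` at once. Distributivity gives
`Π_{J ∪ {j}} + Σ_K = (N_j + Σ_K) ∩ (Π_J + Σ_K)`, the sum of the two submodules on the right is
`Π_J + Σ_{K ∪ {j}}`, and the exact sequence, applied also with `V` replaced by `U ∩ V`, shows that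
`E/(U ∩ V)` is projective as soon as `E/U`, `E/V` and `E/(U + V)` are.
-/

section ProjectiveQuotients

variable {A : Type*} [Ring A]

theorem projective_middle_iff_of_exact {K P Q : Type*} [AddCommGroup K] [Module A K]
    [AddCommGroup P] [Module A P] [AddCommGroup Q] [Module A Q] [Module.Projective A Q]
    {f : K →ₗ[A] P} {g : P →ₗ[A] Q} (hfg : Function.Exact f g) (hf : Function.Injective f)
    (hg : Function.Surjective g) : Module.Projective A P ↔ Module.Projective A K := by
  obtain ⟨s, hs⟩ := Module.projective_lifting_property g LinearMap.id hg
  have e : P ≃ₗ[A] K × Q := (hfg.splitSurjectiveEquiv hf ⟨s, hs⟩).1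
  constructor
  · intro hP
    have : Module.Projective A (K × Q) := .of_equiv' e
    exact .of_split (LinearMap.inl A K Q) (LinearMap.fst A K Q) (LinearMap.fst_comp_inl A K Q)
  · intro hK
    exact .of_equiv' e.symm

variable {E : Type*} [AddCommGroup E] [Module A E]

theorem injective_mapQ_subtype (U V : Submodule A E) :
    Function.Injective ((V.comap U.subtype).mapQ V U.subtype le_rfl) := by
  rw [← LinearMap.ker_eq_bot]
  exact Submodule.ker_liftQ_eq_bot _ _ _ (by rw [LinearMap.ker_comp, Submodule.ker_mkQ])

theorem exact_mapQ_subtype_factor (U V : Submodule A E) :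
    Function.Exact ((V.comap U.subtype).mapQ V U.subtype le_rfl)
      (Submodule.factor (le_sup_right : V ≤ U ⊔ V)) := by
  rw [LinearMap.exact_iff, Submodule.range_mapQ, Submodule.range_subtype, Submodule.factor,
    Submodule.mapQ, Submodule.ker_liftQ, LinearMap.comp_id, Submodule.ker_mkQ, Submodule.map_sup,
    Submodule.mkQ_map_self, sup_bot_eq]

theorem projective_quotient_iff_projective_quotient_comap_subtype (U V : Submodule A E)
    [Module.Projective A (E ⧸ U ⊔ V)] :
    Module.Projective A (E ⧸ V) ↔ Module.Projective A (U ⧸ V.comap U.subtype) :=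
  projective_middle_iff_of_exact (exact_mapQ_subtype_factor U V) (injective_mapQ_subtype U V)
    (Submodule.factor_surjective le_sup_right)

theorem projective_quotient_inf_iff (U V : Submodule A E) [Module.Projective A (E ⧸ U)]
    [Module.Projective A (E ⧸ U ⊔ V)] :
    Module.Projective A (E ⧸ U ⊓ V) ↔ Module.Projective A (E ⧸ V) := by
  have hcomap : (U ⊓ V).comap U.subtype = V.comap U.subtype := by
    rw [Submodule.comap_inf, Submodule.comap_subtype_self, top_inf_eq]
  have : Module.Projective A (E ⧸ U ⊔ (U ⊓ V)) := by rwa [sup_inf_self]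
  rw [projective_quotient_iff_projective_quotient_comap_subtype U V, ← hcomap,
    projective_quotient_iff_projective_quotient_comap_subtype U (U ⊓ V)]

end ProjectiveQuotients

section DistributiveGeneration

variable {α ι : Type*}

theorem finsetInf_eq_top_or_mem [SemilatticeInf α] [OrderTop α] {t : Set α} (ht : InfClosed t)
    {f : ι → α} (hf : ∀ i, f i ∈ t) (J : Finset ι) : J.inf f = ⊤ ∨ J.inf f ∈ t := by
  rcases J.eq_empty_or_nonempty with rfl | hJ
  · exact .inl Finset.inf_empty
  · exact .inr (Finset.inf'_eq_inf hJ f ▸ ht.finsetInf'_mem hJ fun i _ => hf i)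

theorem finsetSup_eq_bot_or_mem [SemilatticeSup α] [OrderBot α] {t : Set α} (ht : SupClosed t)
    {f : ι → α} (hf : ∀ i, f i ∈ t) (K : Finset ι) : K.sup f = ⊥ ∨ K.sup f ∈ t :=
  finsetInf_eq_top_or_mem (α := αᵒᵈ) ht hf K

variable [Lattice α]

/-- The sublattice generated by `s` is distributive, for a subset `s` of a lattice which need not
be distributive itself. One of the two distributive laws is imposed, as it implies the other. -/
def GeneratesDistribLattice (s : Set α) : Prop :=
  ∀ a ∈ latticeClosure s, ∀ b ∈ latticeClosure s, ∀ c ∈ latticeClosure s,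
    a ⊓ (b ⊔ c) = (a ⊓ b) ⊔ (a ⊓ c)

theorem GeneratesDistribLattice.sup_inf_right {s : Set α} (hs : GeneratesDistribLattice s)
    {a b c : α} (ha : a ∈ latticeClosure s) (hb : b ∈ latticeClosure s)
    (hc : c ∈ latticeClosure s) : (a ⊓ b) ⊔ c = (a ⊔ c) ⊓ (b ⊔ c) := by
  let L : Sublattice α := ⟨latticeClosure s, isSublattice_latticeClosure.supClosed,
    isSublattice_latticeClosure.infClosed⟩
  let _ : DistribLattice L := .ofInfSupLe fun x y z => (hs x x.2 y y.2 z z.2).le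
  exact congrArg Subtype.val (_root_.sup_inf_right (⟨a, ha⟩ : L) ⟨b, hb⟩ ⟨c, hc⟩)

theorem GeneratesDistribLattice.inf_finsetInf_sup_finsetSup [OrderTop α] [OrderBot α] {f : ι → α}
    (hf : GeneratesDistribLattice (Set.range f)) (j : ι) (J K : Finset ι) :
    (f j ⊓ J.inf f) ⊔ K.sup f = (f j ⊔ K.sup f) ⊓ (J.inf f ⊔ K.sup f) := by
  have hmem (i : ι) : f i ∈ latticeClosure (Set.range f) := subset_latticeClosure ⟨i, rfl⟩
  rcases finsetSup_eq_bot_or_mem isSublattice_latticeClosure.supClosed hmem K with hK | hK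
  · simp only [hK, sup_bot_eq]
  rcases finsetInf_eq_top_or_mem isSublattice_latticeClosure.infClosed hmem J with hJ | hJ
  · simp only [hJ, top_sup_eq, inf_top_eq]
  exact hf.sup_inf_right (hmem j) hJ hK

end DistributiveGeneration

section DistributiveFamilies

variable {A E ι : Type*} [Ring A] [AddCommGroup E] [Module A E] {N : ι → Submodule A E}

theorem GeneratesDistribLattice.projective_quotient_finsetInf_sup_finsetSup
    (hN : GeneratesDistribLattice (Set.range N))
    (hquot : ∀ K : Finset ι, Module.Projective A (E ⧸ K.sup N)) (J K : Finset ι) :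
    Module.Projective A (E ⧸ J.inf N ⊔ K.sup N) := by
  classical
  induction J using Finset.induction_on generalizing K with
  | empty =>
    have : Subsingleton (E ⧸ (∅ : Finset ι).inf N ⊔ K.sup N) := by
      rw [Finset.inf_empty, top_sup_eq, Submodule.Quotient.subsingleton_iff]
    infer_instance
  | insert j J _ ih =>
    have : Module.Projective A (E ⧸ N j ⊔ K.sup N) :=
      Finset.sup_insert (f := N) (b := j) (s := K) ▸ hquot (insert j K)
    have hsup : (N j ⊔ K.sup N) ⊔ (J.inf N ⊔ K.sup N) = J.inf N ⊔ (insert j K).sup N := by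
      rw [← sup_sup_distrib_right, sup_comm (N j), sup_assoc, Finset.sup_insert]
    have : Module.Projective A (E ⧸ (N j ⊔ K.sup N) ⊔ (J.inf N ⊔ K.sup N)) :=
      hsup ▸ ih (insert j K)
    rw [Finset.inf_insert, hN.inf_finsetInf_sup_finsetSup, projective_quotient_inf_iff]
    exact ih K

theorem statement5_general (hN : GeneratesDistribLattice (Set.range N))
    (hquot : ∀ K : Finset ι, Module.Projective A (E ⧸ K.sup N)) (J K : Finset ι) :
    Module.Projective A (↥(J.inf N) ⧸ (K.sup N).comap (J.inf N).subtype) :=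
  have := hN.projective_quotient_finsetInf_sup_finsetSup hquot J K
  projective_quotient_iff_projective_quotient_comap_subtype _ _ |>.1 (hquot K)

end DistributiveFamilies

theorem statement5 {n : ℕ} (hn : 1 ≤ n) (Mf : Fin n → Submodule R M)
    (hM : Module.Projective R M)
    (hQ : ∀ I : Finset (Fin n), Module.Projective R (M ⧸ sigmaSub Mf I))
    (hdist : IsDistributiveFamily Mf) :
    ∀ I : Finset (Fin n), Module.Projective R (subquotL Mf I) := by
  intro I
  exact statement5_general hdist hQ Iᶜ I
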